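/- For every integer b ≥ 2 and every integer n ≥ 1, S_b(n) = ((b-1)/(2 log b)) · n · log n + n · ∑_{k ∈ ℤ} c_b(k) e^{2πik (log n / log b)}, where the sum over k ∈ ℤ converges absolutely; here the left side is the integer S_b(n) viewed as a complex number. -/

import Mathlib

noncomputable section

/-- The base-`b` digit sum of `n`. -/
def digitSum (b n : ℕ) : ℕ := (Nat.digits b n).sum

/-- The cumulative base-`b` digit sum `S_b(n) = ∑_{m=1}^{n-1} d_b(m)`. -/
def cumDigitSum (b n : ℕ) : ℕ := ∑ m ∈ Finset.range n, digitSum b m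

/-- The Fourier coefficients `c_β(k)` from Delange's theorem. -/
def delangeCoeff (β : ℝ) (k : ℤ) : ℂ :=
  if k = 0 then
    ((((β : ℂ) - 1) / (2 * Real.log β)) * (Real.log (2 * Real.pi) - 1) - ((β : ℂ) + 1) / 4)
  else
    -(((β : ℂ) - 1) / (2 * Real.pi * Complex.I * k)) *
      (1 + 2 * Real.pi * Complex.I * k / Real.log β)⁻¹ *
      riemannZeta (2 * Real.pi * Complex.I * k / Real.log β)


/-!
By Legendre's formula, `(b - 1) ∑_{r ≥ 1} ⌊m / b ^ r⌋ = m - d_b(m)`. Summing over `m < n` expresses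
`S_b(n)` through the values at `n / b ^ r` of the primitive `({t} ^ 2 - {t}) / 2` of the sawtooth
function. This primitive vanishes at the integers, so `r` may run over all of `ℤ`: up to elementary
terms, `S_b(n) / n` is the sum of a fixed kernel over the translates `log n / log b + m`, `m ∈ ℤ`,
and Poisson summation turns it into a Fourier series in `log n / log b`.

Under the substitution `t = b ^ y` the Fourier transform of the kernel at `k` becomes the remainder
integral of the Euler–Maclaurin formula for `ζ(s)` at `s = 2πik / log b`. For `k = 0` this integral
is given by the derivative `-log (2π) / 2` of `ζ` at `0`. The series converges absolutely because
`ζ(it) = O(|t| ^ (3 / 4))`, which follows from `ζ(1 + it) = O(log |t|)` and the functional equation.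
-/

namespace Delange

section Sawtooth

open Set

/-- The primitive `({t} ^ 2 - {t}) / 2` of the sawtooth function `{t} - 1 / 2`, normalised to vanish
at the integers. -/
def sawtoothPrimitive (t : ℝ) : ℝ := (Int.fract t ^ 2 - Int.fract t) / 2

lemma continuous_sawtoothPrimitive : Continuous sawtoothPrimitive :=
  ContinuousOn.comp_fract'' (f := fun x : ℝ => (x ^ 2 - x) / 2) (by fun_prop) (by norm_num)

lemma abs_sawtoothPrimitive_le (t : ℝ) : |sawtoothPrimitive t| ≤ 1 / 8 := by
  have h0 := Int.fract_nonneg t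
  have h1 := (Int.fract_lt_one t).le
  rw [sawtoothPrimitive, abs_le]
  constructor <;> nlinarith [sq_nonneg (Int.fract t - 1 / 2)]

lemma sawtoothPrimitive_natCast (n : ℕ) : sawtoothPrimitive n = 0 := by
  simp [sawtoothPrimitive]

lemma sawtoothPrimitive_of_mem_Icc {n : ℕ} {t : ℝ} (ht : t ∈ Icc (n : ℝ) (n + 1)) :
    sawtoothPrimitive t = ((t - n) ^ 2 - (t - n)) / 2 := by
  rcases ht.2.eq_or_lt with rfl | hlt
  · rw [← Nat.cast_add_one, sawtoothPrimitive_natCast]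
    push_cast
    ring
  · have hfract : Int.fract t = t - n :=
      Int.fract_eq_iff.mpr ⟨by linarith [ht.1], by linarith, n, by simp⟩
    rw [sawtoothPrimitive, hfract]

end Sawtooth

section EulerMaclaurin

open Set MeasureTheory Filter Topology

lemma integral_unit_interval_eq_trapezoid {F f g h : ℝ → ℂ} {a : ℝ}
    (hF : ∀ t ∈ Icc a (a + 1), HasDerivAt F (f t) t)
    (hf : ∀ t ∈ Icc a (a + 1), HasDerivAt f (g t) t)
    (hg : ∀ t ∈ Icc a (a + 1), HasDerivAt g (h t) t)
    (hh : ContinuousOn h (Icc a (a + 1))) :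
    ∫ t in a..a + 1, (((t - a) ^ 2 - (t - a)) / 2 : ℝ) * h t =
      F (a + 1) - F a - (f a + f (a + 1)) / 2 := by
  have ha : uIcc a (a + 1) = Icc a (a + 1) := uIcc_of_le (by linarith)
  have hq (t : ℝ) :
      HasDerivAt (fun t : ℝ => ((((t - a) ^ 2 - (t - a)) / 2 : ℝ) : ℂ)) (t - a - 1 / 2 : ℝ) t := by
    have hsub := (hasDerivAt_id t).sub_const a
    convert! (((hsub.pow 2).sub hsub).div_const 2).ofReal_comp using 1
    push_cast
    simp only [id_eq, pow_one, mul_one]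
    ring
  have hq' (t : ℝ) : HasDerivAt (fun t : ℝ => ((t - a - 1 / 2 : ℝ) : ℂ)) (1 : ℝ) t :=
    (((hasDerivAt_id t).sub_const a).sub_const (1 / 2)).ofReal_comp
  rw [intervalIntegral.integral_eq_sub_of_hasDerivAt (f := fun t =>
    (((t - a) ^ 2 - (t - a)) / 2 : ℝ) * g t - (t - a - 1 / 2 : ℝ) * f t + F t)]
  · push_cast
    ring
  · intro t ht
    rw [ha] at ht
    convert! (((hq t).mul (hg t ht)).sub ((hq' t).mul (hf t ht))).add (hF t ht) using 1
    push_cast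
    ring
  · refine ContinuousOn.intervalIntegrable (ha ▸ ContinuousOn.mul ?_ hh)
    fun_prop

/-- The remainder integral of the Euler–Maclaurin formula for `∑ n ^ (-s)`, started at `a`. -/
def zetaTail (a : ℝ) (s : ℂ) : ℂ :=
  ∫ t in Ioi a, (sawtoothPrimitive t : ℂ) * (t : ℂ) ^ (-s - 2)

lemma integrableOn_zetaTail {a : ℝ} (ha : 0 < a) {s : ℂ} (hs : -1 < s.re) :
    IntegrableOn (fun t : ℝ => (sawtoothPrimitive t : ℂ) * (t : ℂ) ^ (-s - 2)) (Ioi a) := by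
  refine (integrableOn_Ioi_cpow_of_lt (by simp; linarith) ha).bdd_mul (c := 1 / 8)
    (Complex.continuous_ofReal.comp continuous_sawtoothPrimitive).aestronglyMeasurable
    (ae_of_all _ fun t => ?_)
  simpa using abs_sawtoothPrimitive_le t

lemma norm_zetaTail_le {a : ℝ} (ha : 0 < a) {s : ℂ} (hs : -1 < s.re) :
    ‖zetaTail a s‖ ≤ a ^ (-(s.re + 1)) / (8 * (s.re + 1)) := by
  calc ‖zetaTail a s‖
      ≤ ∫ t in Ioi a, 1 / 8 * t ^ (-s.re - 2) := by
        refine norm_integral_le_of_norm_le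
          ((integrableOn_Ioi_rpow_of_lt (by linarith) ha).const_mul _) ?_
        filter_upwards [ae_restrict_mem measurableSet_Ioi] with t ht
        rw [norm_mul, Complex.norm_cpow_eq_rpow_re_of_pos (ha.trans ht), Complex.norm_real,
          Real.norm_eq_abs, Complex.sub_re, Complex.neg_re, Complex.re_ofNat]
        have := ha.trans ht
        gcongr
        exact abs_sawtoothPrimitive_le t
    _ = a ^ (-(s.re + 1)) / (8 * (s.re + 1)) := by
        rw [integral_const_mul, integral_Ioi_rpow_of_lt (by linarith) ha,
          show -s.re - 2 + 1 = -(s.re + 1) by ring]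
        field_simp

lemma hasDerivAt_ofReal_cpow {w : ℂ} {t : ℝ} (ht : 0 < t) :
    HasDerivAt (fun t : ℝ => (t : ℂ) ^ w) (w * (t : ℂ) ^ (w - 1)) t := by
  simpa using (HasDerivAt.cpow_const (c := w) (hasDerivAt_id (t : ℂ))
    (Or.inl (by simpa using ht))).comp_ofReal

lemma zetaTail_sub_zetaTail_add_one {n : ℕ} (hn : 1 ≤ n) {s : ℂ} (hs : -1 < s.re) (hs1 : s ≠ 1) :
    s * (s + 1) * (zetaTail n s - zetaTail (n + 1) s) =
      (n : ℂ) ^ (1 - s) / (s - 1) - ((n : ℂ) + 1) ^ (1 - s) / (s - 1) -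
        ((n : ℂ) ^ (-s) + ((n : ℂ) + 1) ^ (-s)) / 2 := by
  have hn0 : (0 : ℝ) < n := by exact_mod_cast hn
  have hpos {t : ℝ} (ht : t ∈ Icc (n : ℝ) (n + 1)) : 0 < t := hn0.trans_le ht.1
  have hs1' : 1 - s ≠ 0 := sub_ne_zero.mpr hs1.symm
  have hdiff : s * (s + 1) * (zetaTail n s - zetaTail (n + 1) s) =
      ∫ t in (n : ℝ)..n + 1, (((t - n) ^ 2 - (t - n)) / 2 : ℝ) *
        (s * (s + 1) * (t : ℂ) ^ (-s - 2)) := by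
    rw [zetaTail, zetaTail, intervalIntegral.integral_Ioi_sub_Ioi (integrableOn_zetaTail hn0 hs)
      (by linarith), ← intervalIntegral.integral_const_mul]
    refine intervalIntegral.integral_congr fun t ht => ?_
    rw [uIcc_of_le (by linarith)] at ht
    simp only [sawtoothPrimitive_of_mem_Icc ht]
    ring
  have htrapezoid := integral_unit_interval_eq_trapezoid (a := n)
    (F := fun t => (t : ℂ) ^ (1 - s) / (1 - s)) (f := fun t => (t : ℂ) ^ (-s))
    (g := fun t => -s * (t : ℂ) ^ (-s - 1)) (h := fun t => s * (s + 1) * (t : ℂ) ^ (-s - 2))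
    (fun t ht => ?_) (fun t ht => hasDerivAt_ofReal_cpow (hpos ht)) (fun t ht => ?_)
    (fun t ht => ?_)
  · rw [hdiff, htrapezoid, ← neg_sub 1 s]
    push_cast
    simp only [div_neg]
    ring
  · convert! (hasDerivAt_ofReal_cpow (w := 1 - s) (hpos ht)).div_const (1 - s) using 1
    rw [mul_div_cancel_left₀ _ hs1', sub_sub_cancel_left]
  · convert! (hasDerivAt_ofReal_cpow (w := -s - 1) (hpos ht)).const_mul (-s) using 1
    rw [sub_sub, one_add_one_eq_two]
    ring
  · exact (continuousAt_const.mul (hasDerivAt_ofReal_cpow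
      (hpos ht)).continuousAt).continuousWithinAt

/-- The Euler–Maclaurin expression for `ζ(s)` with the first `n` terms of the series summed
explicitly. -/
def eulerMaclaurinZeta (n : ℕ) (s : ℂ) : ℂ :=
  ∑ m ∈ Finset.range n, ((m : ℂ) + 1) ^ (-s) + (n : ℂ) ^ (1 - s) / (s - 1) - (n : ℂ) ^ (-s) / 2 -
    s * (s + 1) * zetaTail n s

lemma eulerMaclaurinZeta_eq_one {n : ℕ} (hn : 1 ≤ n) {s : ℂ} (hs : -1 < s.re) (hs1 : s ≠ 1) :
    eulerMaclaurinZeta n s = eulerMaclaurinZeta 1 s := by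
  induction n, hn using Nat.le_induction with
  | base => rfl
  | succ n hn ih =>
    rw [← ih, eulerMaclaurinZeta, eulerMaclaurinZeta, Finset.sum_range_succ]
    push_cast
    linear_combination zetaTail_sub_zetaTail_add_one hn hs hs1

lemma tendsto_natCast_cpow_zero {w : ℂ} (hw : w.re < 0) :
    Tendsto (fun n : ℕ => (n : ℂ) ^ w) atTop (𝓝 0) := by
  rw [tendsto_zero_iff_norm_tendsto_zero]
  have hrpow : Tendsto (fun n : ℕ => (n : ℝ) ^ w.re) atTop (𝓝 0) := by
    simpa [Function.comp_def] using
      (tendsto_rpow_neg_atTop (neg_pos.mpr hw)).comp tendsto_natCast_atTop_atTop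
  refine hrpow.congr' ?_
  filter_upwards [eventually_ge_atTop 1] with n hn
  rw [Complex.norm_natCast_cpow_of_pos hn]

lemma tendsto_zetaTail_natCast {s : ℂ} (hs : -1 < s.re) :
    Tendsto (fun n : ℕ => zetaTail n s) atTop (𝓝 0) := by
  have hbound : Tendsto (fun n : ℕ => (n : ℝ) ^ (-(s.re + 1)) / (8 * (s.re + 1))) atTop (𝓝 0) := by
    simpa [Function.comp_def] using ((tendsto_rpow_neg_atTop (y := s.re + 1) (by linarith)).comp
      tendsto_natCast_atTop_atTop).div_const (8 * (s.re + 1))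
  refine squeeze_zero_norm' ?_ hbound
  filter_upwards [eventually_ge_atTop 1] with n hn
  exact norm_zetaTail_le (by exact_mod_cast hn) hs

lemma eulerMaclaurinZeta_one_of_one_lt_re {s : ℂ} (hs : 1 < s.re) :
    eulerMaclaurinZeta 1 s = riemannZeta s := by
  have hs1 : s ≠ 1 := by rintro rfl; simp at hs
  have hseries : HasSum (fun n : ℕ => ((n : ℂ) + 1) ^ (-s)) (riemannZeta s) := by
    have hsum := ((summable_nat_add_iff 1).mpr (Complex.summable_one_div_nat_cpow.mpr hs)).hasSum
    push_cast at hsum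
    rw [← zeta_eq_tsum_one_div_nat_add_one_cpow hs] at hsum
    simpa only [Complex.cpow_neg, one_div] using hsum
  have hpow := tendsto_natCast_cpow_zero (w := 1 - s) (by simpa using hs)
  have hpow' := tendsto_natCast_cpow_zero (w := -s) (by simp; linarith)
  have hlim : Tendsto (eulerMaclaurinZeta · s) atTop (𝓝 (riemannZeta s)) := by
    simpa [eulerMaclaurinZeta] using
      ((hseries.tendsto_sum_nat.add (hpow.div_const (s - 1))).sub (hpow'.div_const 2)).sub
        ((tendsto_zetaTail_natCast (by linarith)).const_mul (s * (s + 1)))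
  refine tendsto_nhds_unique (tendsto_const_nhds.congr' ?_) hlim
  filter_upwards [eventually_ge_atTop 1] with n hn
  exact (eulerMaclaurinZeta_eq_one hn (by linarith) hs1).symm

lemma differentiableAt_zetaTail {a : ℝ} (ha : 0 < a) {s : ℂ} (hs : -1 < s.re) :
    DifferentiableAt ℂ (zetaTail a) s := by
  set f : ℝ → ℂ := (Ioi a).indicator fun t => (sawtoothPrimitive t : ℂ) with hf
  have hmellin : zetaTail a = mellin f ∘ fun s => -s - 1 := by
    ext s
    have hind (t : ℝ) : (t : ℂ) ^ (-s - 1 - 1) • f t = (Ioi a).indicator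
        (fun t : ℝ => (sawtoothPrimitive t : ℂ) * (t : ℂ) ^ (-s - 2)) t := by
      rw [hf, indicator_apply, indicator_apply, sub_sub, one_add_one_eq_two]
      split_ifs <;> simp [mul_comm]
    rw [Function.comp_apply, mellin, zetaTail, integral_congr_ae (ae_of_all _ hind),
      setIntegral_indicator measurableSet_Ioi, inter_eq_right.mpr (Ioi_subset_Ioi ha.le)]
  have hbdd (l : Filter ℝ) : f =O[l] fun t => t ^ (-0 : ℝ) := by
    refine Asymptotics.IsBigO.of_bound (1 / 8) (Eventually.of_forall fun t => ?_)
    have := abs_sawtoothPrimitive_le t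
    simpa using (norm_indicator_le_norm_self _ _).trans (by simpa using this)
  have hzero : f =O[𝓝[>] 0] fun t => t ^ (-(-s.re - 2)) := by
    refine Asymptotics.IsBigO.of_bound 1 ?_
    filter_upwards [nhdsWithin_le_nhds (Iio_mem_nhds ha)] with t ht
    rw [hf, indicator_of_notMem (by simpa using ht.le), norm_zero]
    positivity
  rw [hmellin]
  refine DifferentiableAt.comp s (mellin_differentiableAt_of_isBigO_rpow (a := 0)
    (b := -s.re - 2) ?_ (hbdd _) (by simp; linarith) hzero (by simp)) (by fun_prop)
  exact ((Complex.continuous_ofReal.comp continuous_sawtoothPrimitive).locallyIntegrable.indicator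
    measurableSet_Ioi).locallyIntegrableOn _

theorem riemannZeta_eq_eulerMaclaurinZeta {n : ℕ} (hn : 1 ≤ n) {s : ℂ} (hs : -1 < s.re)
    (hs1 : s ≠ 1) : riemannZeta s = eulerMaclaurinZeta n s := by
  rw [eulerMaclaurinZeta_eq_one hn hs hs1]
  -- Extend from `Re s > 1` by the identity theorem, clearing the pole at `1` by the factor `s - 1`.
  have hopen (a : ℝ) : IsOpen {z : ℂ | a < z.re} := isOpen_lt continuous_const Complex.continuous_re
  set G : ℂ → ℂ := fun z => (z - 1) + 1 - (z - 1) / 2 - (z - 1) * (z * (z + 1) * zetaTail 1 z)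
  have hG_diff : DifferentiableOn ℂ G {z | -1 < z.re} := fun z hz => by
    have := differentiableAt_zetaTail one_pos hz
    exact DifferentiableAt.differentiableWithinAt (by fun_prop)
  have hG {z : ℂ} (hz : z ≠ 1) : G z = (z - 1) * eulerMaclaurinZeta 1 z := by
    have : z - 1 ≠ 0 := sub_ne_zero.mpr hz
    simp only [G, eulerMaclaurinZeta, Finset.sum_range_one, Nat.cast_zero, zero_add, Nat.cast_one,
      Complex.one_cpow]
    field_simp
  have hζ {z : ℂ} (hz : z ≠ 1) : riemannZeta₁ z = (z - 1) * riemannZeta z := by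
    rw [riemannZeta_eq_inv_sub_mul hz, mul_inv_cancel_left₀ (sub_ne_zero.mpr hz)]
  have hEq : EqOn G riemannZeta₁ {z | -1 < z.re} := by
    refine (hG_diff.analyticOnNhd (hopen _)).eqOn_of_preconnected_of_eventuallyEq
      (differentiable_riemannZeta₁.differentiableOn.analyticOnNhd (hopen _))
      (convex_halfSpace_re_gt (-1)).isPreconnected (z₀ := 2) (by norm_num) ?_
    filter_upwards [(hopen 1).mem_nhds (by simp : (2 : ℂ) ∈ _)] with z hz
    have hz1 : z ≠ 1 := by rintro rfl; simp at hz
    rw [hG hz1, hζ hz1, eulerMaclaurinZeta_one_of_one_lt_re hz]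
  have hmul := hEq hs
  rw [hG hs1, hζ hs1] at hmul
  exact (mul_left_cancel₀ (sub_ne_zero.mpr hs1) hmul).symm

lemma mul_zetaTail_one {s : ℂ} (hs : -1 < s.re) (hs1 : s ≠ 1) :
    s * (s + 1) * zetaTail 1 s = (s - 1)⁻¹ + 1 / 2 - riemannZeta s := by
  rw [riemannZeta_eq_eulerMaclaurinZeta le_rfl hs hs1]
  simp only [eulerMaclaurinZeta, Finset.sum_range_one, Nat.cast_zero, zero_add, Nat.cast_one,
    Complex.one_cpow]
  ring

lemma zetaTail_one_zero : zetaTail 1 0 = ((Real.log (2 * Real.pi) / 2 - 1 : ℝ) : ℂ) := by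
  have hleft : HasDerivAt (fun s : ℂ => s * (s + 1) * zetaTail 1 s) (zetaTail 1 0) 0 := by
    have hid := hasDerivAt_id (0 : ℂ)
    simpa using! (hid.mul (hid.add_const 1)).mul
      (differentiableAt_zetaTail one_pos (by simp)).hasDerivAt
  have hright : HasDerivAt (fun s : ℂ => (s - 1)⁻¹ + 1 / 2 - riemannZeta s)
      (-1 - deriv riemannZeta 0) 0 := by
    convert! (((hasDerivAt_id (0 : ℂ)).sub_const 1).inv (by simp)).add_const (1 / 2) |>.sub
      (differentiableAt_riemannZeta zero_ne_one).hasDerivAt using 1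
    simp
  have heq : (fun s : ℂ => (s - 1)⁻¹ + 1 / 2 - riemannZeta s) =ᶠ[𝓝 0]
      fun s => s * (s + 1) * zetaTail 1 s := by
    filter_upwards [((isOpen_lt continuous_const Complex.continuous_re).inter
      isOpen_compl_singleton).mem_nhds (by simp : (0 : ℂ) ∈ {z : ℂ | -1 < z.re} ∩ {1}ᶜ)] with z hz
    exact (mul_zetaTail_one hz.1 hz.2).symm
  rw [(hleft.congr_of_eventuallyEq heq).unique hright, deriv_riemannZeta_zero]
  push_cast [Complex.ofReal_log (by positivity : (0 : ℝ) ≤ 2 * Real.pi)]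
  ring

end EulerMaclaurin

section ZetaGrowth

open Complex Filter Asymptotics ComplexConjugate

lemma norm_mul_zetaTail_one_add_mul_I_le {t : ℝ} {n : ℕ} (hn : 1 ≤ n) (ht : |t| ≤ n + 1) :
    ‖(1 + t * I : ℂ) * ((1 + t * I : ℂ) + 1) * zetaTail n (1 + t * I)‖ ≤ 1 := by
  set s : ℂ := 1 + t * I with hs
  have hre : s.re = 1 := by simp [hs]
  have hn1 : (1 : ℝ) ≤ n := by exact_mod_cast hn
  have hnorm_s : ‖s‖ ≤ 3 * n := by
    calc ‖s‖ ≤ 1 + |t| := by simpa [hs] using norm_add_le (1 : ℂ) (t * I)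
      _ ≤ 3 * n := by linarith
  have hnorm_s' : ‖s + 1‖ ≤ 4 * n := by
    calc ‖s + 1‖ ≤ ‖s‖ + 1 := by simpa using norm_add_le s 1
      _ ≤ 4 * n := by linarith
  have hnorm_tail : ‖zetaTail n s‖ ≤ ((n : ℝ) ^ 2)⁻¹ / 16 := by
    have h := norm_zetaTail_le (a := n) (s := s) (by linarith) (by linarith)
    rw [hre, one_add_one_eq_two, Real.rpow_neg (by positivity), Real.rpow_two] at h
    linarith
  calc ‖s * (s + 1) * zetaTail n s‖ = ‖s‖ * ‖s + 1‖ * ‖zetaTail n s‖ := by simp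
    _ ≤ (3 * n) * (4 * n) * (((n : ℝ) ^ 2)⁻¹ / 16) := by gcongr
    _ ≤ 1 := by field_simp; norm_num

lemma norm_riemannZeta_one_add_mul_I_le {t : ℝ} (ht : 1 ≤ |t|) :
    ‖riemannZeta (1 + t * I)‖ ≤ 4 + Real.log |t| := by
  set s : ℂ := 1 + t * I with hs
  have hre : s.re = 1 := by simp [hs]
  have hs_sub : ‖s - 1‖ = |t| := by simp [hs]
  have hs1 : s ≠ 1 := by
    rw [← sub_ne_zero, ← norm_pos_iff, hs_sub]
    linarith
  set N : ℕ := ⌊|t|⌋₊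
  have hN : 1 ≤ N := Nat.one_le_floor_iff _ |>.mpr ht
  have hN1 : (1 : ℝ) ≤ N := by exact_mod_cast hN
  have htN : |t| ≤ N + 1 := (Nat.lt_floor_add_one _).le
  have hnorm_pow (m : ℕ) (hm : 0 < m) : ‖(m : ℂ) ^ (-s)‖ = (m : ℝ)⁻¹ := by
    rw [norm_natCast_cpow_of_pos hm, neg_re, hre, Real.rpow_neg_one]
  have hsum : ‖∑ m ∈ Finset.range N, ((m : ℂ) + 1) ^ (-s)‖ ≤ 1 + Real.log |t| := by
    calc ‖∑ m ∈ Finset.range N, ((m : ℂ) + 1) ^ (-s)‖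
        ≤ ∑ m ∈ Finset.range N, ‖((m : ℂ) + 1) ^ (-s)‖ := norm_sum_le _ _
      _ = harmonic N := by
        push_cast [harmonic]
        exact Finset.sum_congr rfl fun m _ => by exact_mod_cast hnorm_pow (m + 1) m.succ_pos
      _ ≤ 1 + Real.log |t| := harmonic_floor_le_one_add_log _ ht
  have hpole : ‖(N : ℂ) ^ (1 - s) / (s - 1)‖ ≤ 1 := by
    rw [norm_div, norm_natCast_cpow_of_pos hN, hs_sub, sub_re, one_re, hre, sub_self,
      Real.rpow_zero]
    exact div_le_one_of_le₀ ht (by positivity)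
  have hhalf : ‖(N : ℂ) ^ (-s) / 2‖ ≤ 1 := by
    rw [norm_div, hnorm_pow N hN, norm_ofNat]
    linarith [inv_le_one_of_one_le₀ hN1]
  have htail : ‖s * (s + 1) * zetaTail N s‖ ≤ 1 := norm_mul_zetaTail_one_add_mul_I_le hN htN
  rw [riemannZeta_eq_eulerMaclaurinZeta hN (by linarith) hs1, eulerMaclaurinZeta]
  calc _ ≤ 1 + Real.log |t| + 1 + 1 + 1 := norm_sub_le_of_le (norm_sub_le_of_le
        (norm_add_le_of_le hsum hpole) hhalf) htail
    _ = 4 + Real.log |t| := by ring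

lemma norm_Gammaℝ_conj (s : ℂ) : ‖Gammaℝ (conj s)‖ = ‖Gammaℝ s‖ := by
  have hhalf : conj s / 2 = conj (s / 2) := by rw [map_div₀, map_ofNat]
  rw [Gammaℝ_def, Gammaℝ_def, hhalf, Gamma_conj, norm_mul, norm_mul, norm_conj,
    norm_cpow_eq_rpow_re_of_pos Real.pi_pos, norm_cpow_eq_rpow_re_of_pos Real.pi_pos]
  simp

lemma norm_Gammaℝ_one_sub_mul_I_sq (t : ℝ) :
    ‖Gammaℝ (1 - t * I)‖ ^ 2 = (Real.cosh (Real.pi * t / 2))⁻¹ := by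
  have hconj : (1 - t * I : ℂ) = conj (1 + t * I) := by simp [sub_eq_add_neg]
  have hcos : cos (Real.pi * (t * I) / 2) = (Real.cosh (Real.pi * t / 2) : ℂ) := by
    rw [ofReal_cosh, ← cos_mul_I]
    push_cast
    ring_nf
  calc ‖Gammaℝ (1 - t * I)‖ ^ 2 = ‖Gammaℝ (1 - t * I) * Gammaℝ (1 + t * I)‖ := by
        rw [norm_mul, hconj, norm_Gammaℝ_conj, sq]
    _ = (Real.cosh (Real.pi * t / 2))⁻¹ := by
        rw [Gammaℝ_one_sub_mul_Gammaℝ_one_add, hcos, norm_inv, norm_real, Real.norm_eq_abs,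
          abs_of_pos (Real.cosh_pos _)]

lemma norm_Gammaℝ_mul_I_sq {t : ℝ} (ht : t ≠ 0) :
    ‖Gammaℝ (t * I)‖ ^ 2 * |t| = 2 * Real.pi * |Real.sinh (Real.pi * t / 2)|⁻¹ := by
  have hconj : (-(t * I) : ℂ) = conj (t * I) := by simp
  have hcos : cos (Real.pi * (1 + t * I) / 2) = -(Real.sinh (Real.pi * t / 2) * I) := by
    rw [ofReal_sinh, ← sin_mul_I, ← cos_add_pi_div_two]
    push_cast
    ring_nf
  have hreflect := Gammaℝ_one_sub_mul_Gammaℝ_one_add (1 + t * I)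
  rw [hcos, sub_add_cancel_left, ← add_assoc, one_add_one_eq_two, add_comm 2,
    Gammaℝ_add_two (by simp [ht])] at hreflect
  have hnorm := congrArg norm hreflect
  simp only [hconj, norm_mul, norm_Gammaℝ_conj, norm_div, norm_inv, norm_neg, norm_I, norm_real,
    norm_ofNat, Real.norm_eq_abs, mul_one, abs_of_pos Real.pi_pos] at hnorm
  rw [← hnorm]
  field_simp

lemma norm_riemannZeta_mul_I_sq {t : ℝ} (ht : t ≠ 0) :
    ‖riemannZeta (t * I)‖ ^ 2 =
      |t| * |Real.tanh (Real.pi * t / 2)| / (2 * Real.pi) * ‖riemannZeta (1 - t * I)‖ ^ 2 := by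
  have htI : (t * I : ℂ) ≠ 0 := by simp [ht]
  have htI' : (1 - t * I : ℂ) ≠ 0 := fun h => by simpa using congrArg re h
  have hsinh : |Real.sinh (Real.pi * t / 2)| ≠ 0 := by simp [ht, Real.pi_ne_zero]
  have hcosh := (Real.cosh_pos (Real.pi * t / 2)).ne'
  have hΓ := norm_Gammaℝ_one_sub_mul_I_sq t
  have hΓ' := norm_Gammaℝ_mul_I_sq ht
  have hΓ_ne : ‖Gammaℝ (1 - t * I)‖ ^ 2 ≠ 0 := by rw [hΓ]; positivity
  have hΓ_ne' : ‖Gammaℝ (t * I)‖ ^ 2 ≠ 0 := fun h => by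
    rw [h, zero_mul] at hΓ'
    exact absurd hΓ'.symm (by have := Real.pi_pos; positivity)
  rw [riemannZeta_def_of_ne_zero htI, riemannZeta_def_of_ne_zero htI', completedRiemannZeta_one_sub,
    norm_div, norm_div, div_pow, div_pow, Real.tanh_eq_sinh_div_cosh, abs_div,
    abs_of_pos (Real.cosh_pos _), hΓ]
  field_simp
  rw [← eq_div_iff (by positivity)] at hΓ'
  rw [hΓ']
  field_simp

lemma norm_riemannZeta_mul_I_le {t : ℝ} (ht : 1 ≤ |t|) :
    ‖riemannZeta (t * I)‖ ≤ 8 * |t| ^ (3 / 4 : ℝ) := by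
  have ht0 : 0 < |t| := by linarith
  have hsqrt : ‖riemannZeta (t * I)‖ ≤ |t| ^ (1 / 2 : ℝ) * ‖riemannZeta (1 - t * I)‖ := by
    have htanh : |Real.tanh (Real.pi * t / 2)| / (2 * Real.pi) ≤ 1 := by
      rw [div_le_one (by positivity)]
      linarith [Real.abs_tanh_lt_one (Real.pi * t / 2), Real.pi_gt_three]
    refine le_of_sq_le_sq ?_ (by positivity)
    rw [norm_riemannZeta_mul_I_sq (abs_pos.mp ht0), mul_pow, ← Real.sqrt_eq_rpow,
      Real.sq_sqrt ht0.le, mul_div_assoc]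
    gcongr
    exact mul_le_of_le_one_right ht0.le htanh
  have hline : ‖riemannZeta (1 - t * I)‖ ≤ 4 + Real.log |t| := by
    simpa [sub_eq_add_neg] using norm_riemannZeta_one_add_mul_I_le (t := -t) (by simpa using ht)
  have hlog : 4 + Real.log |t| ≤ 8 * |t| ^ (1 / 4 : ℝ) := by
    have hone : 1 ≤ |t| ^ (1 / 4 : ℝ) := Real.one_le_rpow ht (by norm_num)
    have := Real.log_le_rpow_div ht0.le (ε := 1 / 4) (by norm_num)
    linarith
  calc ‖riemannZeta (t * I)‖ ≤ |t| ^ (1 / 2 : ℝ) * (8 * |t| ^ (1 / 4 : ℝ)) :=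
        hsqrt.trans (by gcongr; exact hline.trans hlog)
    _ = 8 * |t| ^ (3 / 4 : ℝ) := by
        rw [mul_left_comm, ← Real.rpow_add ht0]
        norm_num

lemma isBigO_riemannZeta_div_cocompact :
    (fun t : ℝ => riemannZeta (t * I) / (t * I * (t * I + 1))) =O[cocompact ℝ]
      fun t => |t| ^ (-(5 / 4) : ℝ) := by
  refine IsBigO.of_bound 8 ?_
  filter_upwards [tendsto_norm_cocompact_atTop.eventually_ge_atTop 1] with t ht
  rw [Real.norm_eq_abs] at ht
  have ht0 : 0 < |t| := by linarith
  have hle : |t| ≤ ‖(t * I + 1 : ℂ)‖ := by simpa using abs_im_le_norm (t * I + 1 : ℂ)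
  calc ‖riemannZeta (t * I) / (t * I * (t * I + 1))‖
      = ‖riemannZeta (t * I)‖ / (|t| * ‖(t * I + 1 : ℂ)‖) := by simp
    _ ≤ 8 * |t| ^ (3 / 4 : ℝ) / (|t| * |t|) := by
        gcongr
        exact norm_riemannZeta_mul_I_le ht
    _ = 8 * ‖|t| ^ (-(5 / 4) : ℝ)‖ := by
        rw [Real.norm_of_nonneg (by positivity), ← sq, ← Real.rpow_two, mul_div_assoc,
          ← Real.rpow_sub ht0]
        norm_num

lemma summable_riemannZeta_div {a : ℝ} (ha : a ≠ 0) :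
    Summable fun k : ℤ => riemannZeta ((a * k : ℝ) * I) /
      ((a * k : ℝ) * I * ((a * k : ℝ) * I + 1)) := by
  have htendsto : Tendsto (fun k : ℤ => a * k) cofinite (cocompact ℝ) :=
    (Homeomorph.mulLeft₀ a ha).isClosedEmbedding.tendsto_cocompact.comp Int.tendsto_coe_cofinite
  refine summable_of_isBigO ((Real.summable_abs_int_rpow (b := 5 / 4) (by norm_num)).mul_left
    (|a| ^ (-(5 / 4) : ℝ))) ((isBigO_riemannZeta_div_cocompact.comp_tendsto htendsto).congr_right
    fun k => ?_)
  rw [Function.comp_apply, abs_mul, Real.mul_rpow (abs_nonneg _) (abs_nonneg _)]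

end ZetaGrowth

section DigitSums

open Finset

lemma hasSum_natCast_div_pow {b : ℕ} (hb : 2 ≤ b) (m : ℕ) :
    HasSum (fun r : ℕ => ((m / b ^ (r + 1) : ℕ) : ℝ)) ((m - digitSum b m) / (b - 1)) := by
  have hb1 : (b : ℝ) - 1 ≠ 0 := sub_ne_zero.mpr (by exact_mod_cast (by omega : b ≠ 1))
  have hlegendre : ((b : ℝ) - 1) * ∑ r ∈ range (Nat.log b m + 1), ((m / b ^ (r + 1) : ℕ) : ℝ) =
      m - digitSum b m := by
    have h := congrArg (Nat.cast : ℕ → ℝ)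
      (Nat.sub_one_mul_sum_log_div_pow_eq_sub_sum_digits (p := b) m)
    push_cast [Nat.cast_sub (Nat.digit_sum_le b m), Nat.cast_sub (by omega : 1 ≤ b)] at h
    simpa [digitSum] using h
  rw [← hlegendre, mul_div_cancel_left₀ _ hb1]
  refine hasSum_sum_of_ne_finset_zero fun r hr => ?_
  rw [mem_range, not_lt] at hr
  rw [Nat.div_eq_of_lt (Nat.lt_pow_of_log_lt hb (by omega)), Nat.cast_zero]

lemma two_mul_sum_range_div (q n : ℕ) :
    2 * ∑ m ∈ range n, m / q + q * ((n / q) ^ 2 + n / q) = 2 * (n / q) * n := by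
  induction n with
  | zero => simp
  | succ n ih =>
    rw [sum_range_succ, Nat.succ_div]
    split_ifs with hq
    · have hmul : q * (n / q + 1) = n + 1 := by
        rw [← Nat.succ_div_of_dvd hq, Nat.mul_div_cancel' hq]
      linear_combination ih + 2 * hmul
    · linear_combination ih

lemma sum_range_natCast_div {q : ℕ} (hq : 0 < q) (n : ℕ) :
    ∑ m ∈ range n, ((m / q : ℕ) : ℝ) =
      (n : ℝ) ^ 2 / (2 * q) - n / 2 - q * sawtoothPrimitive (n / q) := by
  have hfract : Int.fract ((n : ℝ) / q) = n / q - (n / q : ℕ) := by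
    rw [Int.fract, ← natCast_floor_eq_intCast_floor (by positivity), Nat.floor_div_eq_div]
  have hsum := congrArg (Nat.cast : ℕ → ℝ) (two_mul_sum_range_div q n)
  push_cast at hsum
  rw [sawtoothPrimitive, hfract]
  field_simp
  linear_combination (q : ℝ) * hsum

lemma hasSum_pow_mul_sawtoothPrimitive {b : ℕ} (hb : 2 ≤ b) (n : ℕ) :
    HasSum (fun r : ℕ => (b : ℝ) ^ (r + 1) * sawtoothPrimitive (n / (b : ℝ) ^ (r + 1)) + n / 2)
      ((cumDigitSum b n + n / 2) / (b - 1)) := by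
  have hb1 : (1 : ℝ) < b := by exact_mod_cast hb
  have hb1' : (b : ℝ) - 1 ≠ 0 := by linarith
  have hfloors := hasSum_sum (s := range n) fun m _ => hasSum_natCast_div_pow hb m
  have hgeom := ((hasSum_geometric_of_lt_one (by positivity)
    (inv_lt_one_of_one_lt₀ hb1)).mul_left (b : ℝ)⁻¹).mul_left ((n : ℝ) ^ 2 / 2)
  have hgauss : ∑ m ∈ range n, (m : ℝ) = n * (n - 1) / 2 := by
    clear hfloors hgeom
    induction n with
    | zero => simp
    | succ n ih => rw [sum_range_succ, ih]; push_cast; ring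
  convert! hgeom.sub hfloors using 1
  · ext r
    have hq := sum_range_natCast_div (pow_pos (by omega : 0 < b) (r + 1)) n
    push_cast at hq
    rw [hq, ← pow_succ', inv_pow]
    field_simp
    ring
  · rw [← sum_div, sum_sub_distrib, hgauss, cumDigitSum, Nat.cast_sum]
    field_simp
    ring

end DigitSums

section Kernel

open Set Filter Asymptotics MeasureTheory

/-- The continuous ramp from `0` on `(-∞, -1]` to `1` on `[0, ∞)`. It is the source of the term
`n log n`, since `∑_{j ≥ 1} ramp (x - j) = x` for `x ≥ 0`. -/
def ramp (y : ℝ) : ℝ := max 0 (min 1 (1 + y))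

lemma continuous_ramp : Continuous ramp := by unfold ramp; fun_prop

lemma ramp_of_nonneg {y : ℝ} (hy : 0 ≤ y) : ramp y = 1 := by
  rw [ramp, min_eq_left (by linarith), max_eq_right zero_le_one]

lemma ramp_of_le_neg_one {y : ℝ} (hy : y ≤ -1) : ramp y = 0 :=
  max_eq_left ((min_le_right _ _).trans (by linarith))

lemma ramp_of_mem_Icc {y : ℝ} (hy : y ∈ Icc (-1) 0) : ramp y = 1 + y := by
  rw [ramp, min_eq_right (by linarith [hy.2]), max_eq_right (by linarith [hy.1])]

lemma hasSum_ramp_sub {x : ℝ} (hx : 0 ≤ x) : HasSum (fun r : ℕ => ramp (x - (r + 1))) x := by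
  have hpartial (N : ℕ) : ∑ r ∈ Finset.range N, ramp (x - (r + 1)) = min x N := by
    induction N with
    | zero => simp [hx]
    | succ N ih =>
      rw [Finset.sum_range_succ, ih, ramp]
      push_cast
      grind
  have hzero (r : ℕ) (hr : r ∉ Finset.range ⌈x⌉₊) : ramp (x - (r + 1)) = 0 := by
    rw [Finset.mem_range, not_lt, Nat.ceil_le] at hr
    exact ramp_of_le_neg_one (by linarith)
  have hsum := hasSum_sum_of_ne_finset_zero (L := .unconditional ℕ) hzero
  rwa [hpartial, min_eq_left (Nat.le_ceil x)] at hsum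

/-- The function to which Poisson summation is applied: for `β = b` its translates by `m ∈ ℤ`,
evaluated at `log n / log b`, add up to `S_b(n) / n` up to elementary terms. The second summand
cancels the limit `-1 / 2` of the first one at `-∞`. -/
def delangeKernel (β y : ℝ) : ℝ := sawtoothPrimitive (β ^ y) / β ^ y + (1 - ramp y) / 2

variable {β : ℝ}

lemma continuous_delangeKernel (hβ : 0 < β) : Continuous (delangeKernel β) := by
  have hpow : Continuous fun y : ℝ => β ^ y := Real.continuous_const_rpow hβ.ne'
  exact ((continuous_sawtoothPrimitive.comp hpow).div hpow
    fun y => (Real.rpow_pos_of_pos hβ y).ne').add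
      ((continuous_const.sub continuous_ramp).div_const 2)

lemma delangeKernel_of_nonneg {y : ℝ} (hy : 0 ≤ y) :
    delangeKernel β y = sawtoothPrimitive (β ^ y) / β ^ y := by
  rw [delangeKernel, ramp_of_nonneg hy, sub_self, zero_div, add_zero]

lemma delangeKernel_of_nonpos (hβ : 1 < β) {y : ℝ} (hy : y ≤ 0) :
    delangeKernel β y = β ^ y / 2 - ramp y / 2 := by
  have hpos : 0 < β ^ y := Real.rpow_pos_of_pos (by linarith) y
  have hle : β ^ y ≤ 1 := Real.rpow_le_one_of_one_le_of_nonpos hβ.le hy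
  rw [delangeKernel, sawtoothPrimitive_of_mem_Icc (n := 0) ⟨by simpa using hpos.le, by simpa⟩]
  push_cast
  field_simp
  ring

lemma abs_delangeKernel_le (hβ : 1 < β) {y : ℝ} (hy : 1 ≤ |y|) :
    |delangeKernel β y| ≤ β ^ (-|y|) := by
  have hpos (z : ℝ) : 0 < β ^ z := Real.rpow_pos_of_pos (by linarith) z
  rcases le_abs.mp hy with hy | hy
  · rw [delangeKernel_of_nonneg (by linarith), abs_div, abs_of_pos (hpos y),
      abs_of_nonneg (by linarith : 0 ≤ y), Real.rpow_neg (by linarith), ← one_div]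
    have := hpos y
    gcongr
    linarith [abs_sawtoothPrimitive_le (β ^ y)]
  · rw [delangeKernel_of_nonpos hβ (by linarith), ramp_of_le_neg_one (by linarith), zero_div,
      sub_zero, abs_of_pos (half_pos (hpos y)), abs_of_nonpos (by linarith), neg_neg]
    exact half_le_self (hpos y).le

lemma isBigO_delangeKernel_cocompact (hβ : 1 < β) :
    (fun y => delangeKernel β y) =O[cocompact ℝ] fun y => |y| ^ (-2 : ℝ) := by
  have hexp := (isLittleO_exp_neg_mul_rpow_atTop (Real.log_pos hβ) (-2)).isBigO.comp_tendsto
    (tendsto_norm_cocompact_atTop (E := ℝ))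
  refine IsBigO.trans (IsBigO.of_bound 1 ?_) hexp
  filter_upwards [tendsto_norm_cocompact_atTop.eventually_ge_atTop 1] with y hy
  have hrpow := Real.rpow_def_of_pos (by linarith : 0 < β) (-|y|)
  rw [mul_neg, ← neg_mul] at hrpow
  simpa [hrpow] using abs_delangeKernel_le hβ hy

lemma integrable_delangeKernel (hβ : 1 < β) : Integrable (delangeKernel β) := by
  have hle : (fun y : ℝ => |y| ^ (-2 : ℝ)) =O[cocompact ℝ] fun y => (1 + y ^ 2)⁻¹ := by
    refine IsBigO.of_bound 2 ?_
    filter_upwards [tendsto_norm_cocompact_atTop.eventually_ge_atTop 1] with y hy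
    have hsq : 1 ≤ y ^ 2 := by rwa [one_le_sq_iff_one_le_abs]
    rw [Real.rpow_neg (abs_nonneg y), Real.rpow_two, sq_abs, Real.norm_of_nonneg (by positivity),
      Real.norm_of_nonneg (by positivity), ← div_eq_mul_inv, inv_le_comm₀ (by linarith)
      (by positivity), inv_div]
    linarith
  exact (continuous_delangeKernel (by linarith)).locallyIntegrable.integrable_of_isBigO_cocompact
    ((isBigO_delangeKernel_cocompact hβ).trans hle) (integrable_inv_one_add_sq.integrableAtFilter _)

lemma hasSum_delangeKernel_logb_add {b n : ℕ} (hb : 2 ≤ b) (hn : 1 ≤ n) :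
    HasSum (fun m : ℤ => delangeKernel b (Real.logb b n + m))
      ((cumDigitSum b n / n + 1 / 2) / (b - 1) - Real.logb b n / 2) := by
  have hb1 : (1 : ℝ) < b := by exact_mod_cast hb
  have hb0 : (0 : ℝ) < b := by linarith
  have hn0 : (0 : ℝ) < n := by exact_mod_cast hn
  have hx : 0 ≤ Real.logb b n := Real.logb_nonneg hb1 (by exact_mod_cast hn)
  have hpow (m : ℤ) : (b : ℝ) ^ (Real.logb b n + m) = n * (b : ℝ) ^ m := by
    rw [Real.rpow_add hb0, Real.rpow_logb hb0 hb1.ne' hn0, Real.rpow_intCast]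
  have hnonneg (m : ℕ) : delangeKernel b (Real.logb b n + (m : ℤ)) = 0 := by
    have hcast : (n : ℝ) * (b : ℝ) ^ (m : ℤ) = (n * b ^ m : ℕ) := by simp
    rw [delangeKernel_of_nonneg (by positivity), hpow, hcast, sawtoothPrimitive_natCast, zero_div]
  have hneg : HasSum (fun m : ℕ => delangeKernel b (Real.logb b n + (-(m + 1 : ℤ) : ℤ)))
      ((cumDigitSum b n / n + 1 / 2) / (b - 1) - Real.logb b n / 2) := by
    convert! ((hasSum_pow_mul_sawtoothPrimitive hb n).div_const (n : ℝ)).sub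
      ((hasSum_ramp_sub hx).div_const 2) using 1
    · ext m
      have hzpow : (n : ℝ) * (b : ℝ) ^ (-(m + 1 : ℤ)) = n / (b : ℝ) ^ (m + 1) := by
        rw [zpow_neg, div_eq_mul_inv]
        norm_cast
      rw [delangeKernel, hpow, hzpow]
      push_cast
      field_simp
      ring_nf
    · field_simp
  have hzero : HasSum (fun m : ℕ => delangeKernel b (Real.logb b n + (m : ℤ))) 0 := by
    simpa only [hnonneg] using hasSum_zero
  simpa using HasSum.of_nat_of_neg_add_one (f := fun m : ℤ => delangeKernel b (Real.logb b n + m))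
    hzero hneg

end Kernel

section Fourier

open Complex Set Filter Asymptotics MeasureTheory FourierTransform

lemma setIntegral_Ioi_comp_const_rpow {E : Type*} [NormedAddCommGroup E] [NormedSpace ℝ E]
    {β : ℝ} (hβ : 1 < β) (a : ℝ) (g : ℝ → E) :
    ∫ y in Ioi a, (Real.log β * β ^ y) • g (β ^ y) = ∫ t in Ioi (β ^ a), g t := by
  have hβ0 : 0 < β := by linarith
  have hmono : StrictMono fun y : ℝ => β ^ y := Real.strictMono_rpow_of_base_gt_one hβ
  have himage : (fun y : ℝ => β ^ y) '' Ioi a = Ioi (β ^ a) := by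
    refine Subset.antisymm (image_subset_iff.mpr fun y hy => hmono hy) fun t ht => ?_
    have ht0 : 0 < t := (Real.rpow_pos_of_pos hβ0 a).trans ht
    exact ⟨Real.logb β t, (Real.lt_logb_iff_rpow_lt hβ ht0).mpr ht,
      Real.rpow_logb hβ0 hβ.ne' ht0⟩
  rw [← himage, integral_image_eq_integral_deriv_smul_of_monotoneOn measurableSet_Ioi
    (fun y _ => (Real.hasStrictDerivAt_const_rpow hβ0 y).hasDerivAt.hasDerivWithinAt)
    (hmono.monotone.monotoneOn _)]
  simp only [mul_comm]

lemma integral_exp_mul_one_add {w : ℂ} (hw : w ≠ 0) :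
    ∫ y in (-1 : ℝ)..0, exp (w * y) * (1 + y) = 1 / w - (1 - exp (-w)) / w ^ 2 := by
  rw [intervalIntegral.integral_eq_sub_of_hasDerivAt
    (f := fun y : ℝ => exp (w * y) * ((1 + y) / w - 1 / w ^ 2))]
  · push_cast
    simp only [mul_zero, exp_zero, add_neg_cancel, zero_div, mul_neg_one]
    ring
  · intro y _
    have hid : HasDerivAt (fun y : ℝ => (y : ℂ)) 1 y := ofRealCLM.hasDerivAt
    convert! ((hid.const_mul w).cexp).mul (((hid.const_add 1).div_const w).sub_const (1 / w ^ 2))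
      using 1
    field_simp
    ring
  · exact Continuous.intervalIntegrable (by fun_prop) _ _

variable {β : ℝ}

lemma setIntegral_Ioi_exp_mul_delangeKernel (hβ : 1 < β) (s : ℂ) :
    ∫ y in Ioi (0 : ℝ), exp (-(s * Real.log β) * y) * delangeKernel β y =
      zetaTail 1 s / Real.log β := by
  have hlog : (Real.log β : ℂ) ≠ 0 := by exact_mod_cast (Real.log_pos hβ).ne'
  rw [zetaTail, ← Real.rpow_zero β, ← setIntegral_Ioi_comp_const_rpow hβ, ← integral_div]
  refine setIntegral_congr_fun measurableSet_Ioi fun y hy => ?_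
  have hpos : 0 < β ^ y := Real.rpow_pos_of_pos (by linarith) y
  have hne : ((β ^ y : ℝ) : ℂ) ≠ 0 := by exact_mod_cast hpos.ne'
  have hexp : ((β ^ y : ℝ) : ℂ) ^ (-s) = exp (-(s * Real.log β) * y) := by
    rw [cpow_def_of_ne_zero hne, ← ofReal_log hpos.le, Real.log_rpow (by linarith)]
    push_cast
    ring_nf
  simp only [delangeKernel_of_nonneg hy.le, real_smul, cpow_sub _ _ hne, cpow_ofNat, hexp]
  push_cast
  field_simp

lemma setIntegral_Iic_exp_mul_delangeKernel (hβ : 1 < β) {s : ℂ} (hs : s.re < 1) :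
    ∫ y in Iic (0 : ℝ), exp (-(s * Real.log β) * y) * delangeKernel β y =
      1 / (2 * Real.log β * (1 - s)) -
        (∫ y in (-1 : ℝ)..0, exp (-(s * Real.log β) * y) * (1 + y)) / 2 := by
  have hlog : 0 < Real.log β := Real.log_pos hβ
  have hre : 0 < ((1 - s) * Real.log β).re := by
    rw [re_mul_ofReal, sub_re, one_re]
    exact mul_pos (by linarith) hlog
  have hsplit : ∀ y ∈ Iic (0 : ℝ), exp (-(s * Real.log β) * y) * delangeKernel β y =
      exp ((1 - s) * Real.log β * y) / 2 - (Ioc (-1) 0).indicator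
        (fun y : ℝ => exp (-(s * Real.log β) * y) * (1 + y) / 2) y := by
    intro y hy
    have hexp : exp ((1 - s) * Real.log β * y) =
        exp (-(s * Real.log β) * y) * ((β ^ y : ℝ) : ℂ) := by
      rw [Real.rpow_def_of_pos (by linarith), ofReal_exp, ← exp_add]
      push_cast
      ring_nf
    rw [delangeKernel_of_nonpos hβ hy, hexp]
    by_cases hmem : y ∈ Ioc (-1) 0
    · rw [indicator_of_mem hmem, ramp_of_mem_Icc (Ioc_subset_Icc_self hmem)]
      push_cast
      ring
    · rw [indicator_of_notMem hmem, ramp_of_le_neg_one (by simpa [mem_Iic.mp hy] using hmem)]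
      push_cast
      ring
  rw [setIntegral_congr_fun measurableSet_Iic hsplit, integral_sub, integral_div,
    integral_exp_mul_complex_Iic hre, setIntegral_indicator measurableSet_Ioc,
    inter_eq_right.mpr Ioc_subset_Iic_self,
    ← intervalIntegral.integral_of_le (by norm_num), intervalIntegral.integral_div]
  · rw [ofReal_zero, mul_zero, exp_zero, div_div]
    ring_nf
  · exact (integrableOn_exp_mul_complex_Iic hre 0).div_const 2
  · refine Integrable.restrict ((integrable_indicator_iff measurableSet_Ioc).mpr ?_)
    exact Continuous.integrableOn_Ioc (by fun_prop)

lemma fourier_delangeKernel (hβ : 1 < β) {s : ℂ} {ξ : ℝ}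
    (hs : s * Real.log β = 2 * Real.pi * I * ξ) :
    𝓕 (fun y => (delangeKernel β y : ℂ)) ξ = 1 / (2 * Real.log β * (1 - s)) -
      (∫ y in (-1 : ℝ)..0, exp (-(s * Real.log β) * y) * (1 + y)) / 2 +
        zetaTail 1 s / Real.log β := by
  have hlog : (0 : ℝ) < Real.log β := Real.log_pos hβ
  have hre : s.re = 0 := by
    have h := congrArg re hs
    rw [re_mul_ofReal] at h
    simpa [hlog.ne'] using h
  have hfourier (y : ℝ) : exp ((-2 * Real.pi * y * ξ : ℝ) * I) • (delangeKernel β y : ℂ) =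
      exp (-(s * Real.log β) * y) * delangeKernel β y := by
    rw [hs, smul_eq_mul]
    push_cast
    ring_nf
  have hint : Integrable fun y : ℝ => exp (-(s * Real.log β) * y) * delangeKernel β y := by
    refine (integrable_delangeKernel hβ).ofReal.bdd_mul (c := 1)
      (Continuous.aestronglyMeasurable (by fun_prop)) (ae_of_all _ fun y => ?_)
    simp [norm_exp, hre]
  rw [← setIntegral_Iic_exp_mul_delangeKernel hβ (by linarith),
    ← setIntegral_Ioi_exp_mul_delangeKernel hβ, Real.fourier_real_eq_integral_exp_smul,
    ← setIntegral_union (by simp) measurableSet_Ioi hint.integrableOn hint.integrableOn,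
    Iic_union_Ioi, setIntegral_univ]
  simp only [hfourier]

lemma fourier_delangeKernel_zero (hβ : 1 < β) :
    𝓕 (fun y => (delangeKernel β y : ℂ)) 0 =
      (Real.log (2 * Real.pi) - 1) / (2 * Real.log β) - 1 / 4 := by
  have hlog : (Real.log β : ℂ) ≠ 0 := by exact_mod_cast (Real.log_pos hβ).ne'
  have hramp : ∫ y in (-1 : ℝ)..0, (1 + y : ℂ) = 1 / 2 := by
    have h : ∫ y in (-1 : ℝ)..0, (1 + y) = 1 / 2 := by
      simp [intervalIntegral.integral_comp_add_left (fun y => y)]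
    simpa [← intervalIntegral.integral_ofReal] using congrArg ofReal h
  rw [fourier_delangeKernel hβ (s := 0) (by simp), zetaTail_one_zero]
  simp only [zero_mul, neg_zero, exp_zero, one_mul, hramp]
  push_cast
  field_simp
  ring

/-- The poles `2πik / log β` of `1 / (β ^ s - 1)`, at which the zeta function is evaluated in the
Fourier coefficients of Delange's theorem. -/
def delangePole (β : ℝ) (k : ℤ) : ℂ := 2 * Real.pi * I * k / Real.log β

lemma delangePole_eq_ofReal_mul_I (β : ℝ) (k : ℤ) :
    delangePole β k = (2 * Real.pi / Real.log β * k : ℝ) * I := by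
  rw [delangePole]
  push_cast
  ring

lemma delangePole_re (β : ℝ) (k : ℤ) : (delangePole β k).re = 0 := by
  rw [delangePole_eq_ofReal_mul_I, re_ofReal_mul, I_re, mul_zero]

lemma delangePole_mul_log (hβ : 1 < β) (k : ℤ) :
    delangePole β k * Real.log β = 2 * Real.pi * I * k :=
  div_mul_cancel₀ _ (by exact_mod_cast (Real.log_pos hβ).ne')

lemma delangePole_ne_zero (hβ : 1 < β) {k : ℤ} (hk : k ≠ 0) : delangePole β k ≠ 0 :=
  left_ne_zero_of_mul (b := (Real.log β : ℂ)) (by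
    rw [delangePole_mul_log hβ]
    simp [hk, Real.pi_ne_zero])

lemma fourier_delangeKernel_intCast (hβ : 1 < β) {k : ℤ} (hk : k ≠ 0) :
    𝓕 (fun y => (delangeKernel β y : ℂ)) k = -(riemannZeta (delangePole β k) /
      (delangePole β k * (delangePole β k + 1))) / Real.log β := by
  have hlog : (Real.log β : ℂ) ≠ 0 := by exact_mod_cast (Real.log_pos hβ).ne'
  have hre := delangePole_re β k
  have hs0 := delangePole_ne_zero hβ hk
  have hmul := delangePole_mul_log hβ k
  rw [fourier_delangeKernel hβ (s := delangePole β k) (by exact_mod_cast hmul)]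
  set s := delangePole β k
  have hs1 : s - 1 ≠ 0 := fun h => by simpa [hre] using congrArg re h
  have hs1' : 1 - s ≠ 0 := fun h => by simpa [hre] using congrArg re h
  have hs2 : s + 1 ≠ 0 := fun h => by simpa [hre] using congrArg re h
  have hexp : exp (-(-(s * Real.log β))) = 1 := by
    rw [neg_neg, hmul, ← exp_int_mul_two_pi_mul_I k]
    ring_nf
  have hζ : riemannZeta s = (s - 1)⁻¹ + 1 / 2 - s * (s + 1) * zetaTail 1 s := by
    rw [mul_zetaTail_one (by linarith) (sub_ne_zero.mp hs1)]
    ring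
  rw [integral_exp_mul_one_add (neg_ne_zero.mpr (mul_ne_zero hs0 hlog)), hexp, hζ]
  field_simp
  ring

lemma delangeCoeff_of_ne_zero (hβ : 1 < β) {k : ℤ} (hk : k ≠ 0) :
    delangeCoeff β k = -((β - 1) / Real.log β) *
      (riemannZeta (delangePole β k) / (delangePole β k * (delangePole β k + 1))) := by
  have hs2 : 1 + delangePole β k ≠ 0 := fun h => by simpa [delangePole_re] using congrArg re h
  rw [delangeCoeff, if_neg hk, ← delangePole, ← delangePole_mul_log hβ k, add_comm _ 1]
  field_simp

lemma delangeCoeff_eq_fourier (hβ : 1 < β) (k : ℤ) :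
    delangeCoeff β k = (β - 1) * 𝓕 (fun y => (delangeKernel β y : ℂ)) k -
      if k = 0 then 1 / 2 else 0 := by
  split_ifs with hk
  · rw [hk, delangeCoeff, if_pos rfl, Int.cast_zero, fourier_delangeKernel_zero hβ]
    ring
  · rw [delangeCoeff_of_ne_zero hβ hk, fourier_delangeKernel_intCast hβ hk]
    ring

lemma summable_fourier_delangeKernel (hβ : 1 < β) :
    Summable fun k : ℤ => 𝓕 (fun y => (delangeKernel β y : ℂ)) (k : ℝ) := by
  have ha : 2 * Real.pi / Real.log β ≠ 0 := by
    have := Real.log_pos hβ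
    positivity
  have hsum := ((summable_riemannZeta_div ha).neg.div_const (Real.log β : ℂ))
  simp only [← delangePole_eq_ofReal_mul_I] at hsum
  refine hsum.congr_cofinite ?_
  filter_upwards [eventually_cofinite_ne 0] with k hk
  exact (fourier_delangeKernel_intCast hβ hk).symm

lemma hasSum_delangeCoeff_mul_fourier (hβ : 1 < β) (x : ℝ) :
    HasSum (fun k : ℤ => delangeCoeff β k * fourier k (x : UnitAddCircle))
      ((β - 1) * ∑' m : ℤ, (delangeKernel β (x + m) : ℂ) - 1 / 2) := by
  have hF := summable_fourier_delangeKernel hβ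
  have hpoisson := Real.tsum_eq_tsum_fourier_of_rpow_decay_of_summable
    (continuous_ofReal.comp (continuous_delangeKernel (by linarith))) one_lt_two
    (isBigO_ofReal_left.mpr (isBigO_delangeKernel_cocompact hβ)) hF x
  have hF' : Summable fun k : ℤ => 𝓕 (fun y => (delangeKernel β y : ℂ)) (k : ℝ) *
      fourier k (x : UnitAddCircle) :=
    .of_norm (by simpa only [norm_mul, fourier_apply, Circle.norm_coe, mul_one] using hF.norm)
  convert! (hF'.hasSum.mul_left ((β : ℂ) - 1)).sub (hasSum_ite_eq 0 (1 / 2 : ℂ)) using 1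
  · ext k
    rw [delangeCoeff_eq_fourier hβ, sub_mul, mul_assoc]
    split_ifs with hk <;> simp [hk]
  · exact congrArg (fun z => ((β : ℂ) - 1) * z - 1 / 2) hpoisson

end Fourier

end Delange

theorem delange_formula (b : ℕ) (hb : 2 ≤ b) (n : ℕ) (hn : 1 ≤ n) :
    Summable (fun k : ℤ => ‖delangeCoeff b k *
      Complex.exp (2 * Real.pi * Complex.I * k * (Real.log n / Real.log b))‖) ∧
    (cumDigitSum b n : ℂ) =
      (((b : ℂ) - 1) / (2 * Real.log b)) * n * Real.log n +
        (n : ℂ) * ∑' k : ℤ, delangeCoeff b k *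
          Complex.exp (2 * Real.pi * Complex.I * k * (Real.log n / Real.log b)) := by
  have hb1 : (1 : ℝ) < b := by exact_mod_cast hb
  have hb1' : (b : ℂ) - 1 ≠ 0 := sub_ne_zero.mpr (by exact_mod_cast (by omega : b ≠ 1))
  have hn0 : (n : ℂ) ≠ 0 := by exact_mod_cast (by omega : n ≠ 0)
  have hfourier (k : ℤ) : Complex.exp (2 * Real.pi * Complex.I * k * (Real.log n / Real.log b)) =
      fourier k (Real.logb b n : UnitAddCircle) := by
    rw [fourier_coe_apply, Real.logb]
    push_cast
    ring_nf
  have hseries := Delange.hasSum_delangeCoeff_mul_fourier hb1 (Real.logb b n)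
  have hkernel := Delange.hasSum_delangeKernel_logb_add hb hn
  simp only [hfourier]
  refine ⟨hseries.summable.norm, ?_⟩
  rw [hseries.tsum_eq, ← Complex.ofReal_tsum, hkernel.tsum_eq, Real.logb]
  push_cast
  field_simp
  ring
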